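/- arXiv:1304.3869 — 2 statements merged into one kernel-verified Lean document; each statement's English description precedes it below -/
import Mathlib

section
/- For integers b and N with N ≥ 1 and N not dividing b, the limit as s → 1⁺ of (∑_{n≥1, n≡b mod N} 1/n^s − ∑_{n≥1, n≡-b mod N} 1/n^s) equals (1/N)·(ψ(1−{b/N}) − ψ({b/N})), which equals (π/N)·cot(πb/N). -/
open Real Filter

/-- The digamma function `ψ = Γ'/Γ`. -/
noncomputable def digamma (x : ℝ) : ℝ := deriv Real.Gamma x / Real.Gamma x

/-!
For `N ∤ a`, the positive integers congruent to `a` mod `N` are the numbers `N * (k + x)` with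
`k : ℕ` and `x = {a / N}`, so the Dirichlet series over this class is `N ^ (-s)` times the Hurwitz
series `∑ 1 / (k + x) ^ s`. Each Hurwitz series diverges at `s = 1`, but the terms of the
difference of two of them are `O(k ^ (-s - 1))`, so that the difference is continuous on `0 < s`
and may be evaluated at `s = 1` term by term. There it telescopes, as
`1 / (k + x) = ψ (k + 1 + x) - ψ (k + x)`, and `ψ (n + x) - ψ (n + y)` tends to `0`: by
log-convexity of `Γ` the function `ψ` is monotone, and integer shifts change `ψ` by finitely many
terms `1 / (k + n + y)`. Taking the logarithmic derivative of `Γ(x) Γ(1 - x) = π / sin (π x)` turns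
the difference of digamma values into a cotangent.
-/

open scoped Topology

section Digamma

variable {x y : ℝ}

lemma digamma_eq_logDeriv_Gamma : digamma = logDeriv Gamma := rfl

lemma digamma_add_one (hx : ∀ m : ℕ, x ≠ -m) : digamma (x + 1) = digamma x + 1 / x := by
  have hx0 : x ≠ 0 := by simpa using hx 0
  have hΓ : (fun y => Gamma (y + 1)) =ᶠ[𝓝 x] fun y => y * Gamma y := by
    filter_upwards [isOpen_ne.mem_nhds hx0] with y hy using Gamma_add_one hy
  calc digamma (x + 1) = logDeriv (fun y => Gamma (y + 1)) x := by
        simp only [digamma_eq_logDeriv_Gamma, logDeriv_apply, deriv_comp_add_const]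
    _ = logDeriv (fun y => y * Gamma y) x := (logDeriv_congr_nhds hΓ).eq_of_nhds
    _ = digamma x + 1 / x := by
        rw [logDeriv_mul x hx0 (Gamma_ne_zero hx) differentiableAt_fun_id
          (differentiableAt_Gamma hx), logDeriv_id', digamma_eq_logDeriv_Gamma, add_comm]

lemma digamma_natCast_add (hx : ∀ m : ℕ, x ≠ -m) (n : ℕ) :
    digamma (n + x) = digamma x + ∑ k ∈ Finset.range n, 1 / (k + x) := by
  induction n with
  | zero => simp
  | succ n ih =>
    have hn (m : ℕ) : (n : ℝ) + x ≠ -m := fun h => hx (n + m) (by push_cast; linarith)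
    rw [Finset.sum_range_succ, ← add_assoc, ← ih, ← digamma_add_one hn, Nat.cast_succ,
      add_right_comm]

lemma monotoneOn_digamma : MonotoneOn digamma (Set.Ioi 0) := by
  have hΓ {x : ℝ} (hx : x ∈ Set.Ioi (0 : ℝ)) : DifferentiableAt ℝ Gamma x :=
    differentiableOn_Gamma_Ioi.differentiableAt (Ioi_mem_nhds hx)
  have hlog {x : ℝ} (hx : x ∈ Set.Ioi (0 : ℝ)) : deriv (log ∘ Gamma) x = digamma x :=
    deriv.log (hΓ hx) (Gamma_pos_of_pos hx).ne'
  exact (convexOn_log_Gamma.monotoneOn_deriv fun x hx =>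
    (hΓ hx).log (Gamma_pos_of_pos hx).ne').congr fun x hx => hlog hx

lemma tendsto_digamma_natCast_add_sub (hx : 0 < x) (hy : 0 < y) :
    Tendsto (fun n : ℕ => digamma (n + x) - digamma (n + y)) atTop (𝓝 0) := by
  wlog hyx : y ≤ x generalizing x y
  · simpa using (this hy hx (le_of_not_ge hyx)).neg
  obtain ⟨m, hm⟩ := exists_nat_ge x
  have hupper : Tendsto (fun n : ℕ => ∑ k ∈ Finset.range m, 1 / ((k : ℝ) + (n + y))) atTop
      (𝓝 0) := by
    rw [← Finset.sum_const_zero (s := Finset.range m)]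
    exact tendsto_finsetSum _ fun k _ => (tendsto_atTop_add_const_left _ _
      (tendsto_atTop_add_const_right _ _ tendsto_natCast_atTop_atTop)).const_div_atTop 1
  refine squeeze_zero (fun n => ?_) (fun n => ?_) hupper
  · exact sub_nonneg.2 <| monotoneOn_digamma (Set.mem_Ioi.2 (by positivity))
      (Set.mem_Ioi.2 (by positivity)) (by gcongr)
  · have hny (i : ℕ) : (n : ℝ) + y ≠ -i :=
      ((neg_nonpos.2 i.cast_nonneg).trans_lt (by positivity)).ne'
    rw [sub_le_iff_le_add', ← digamma_natCast_add hny]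
    exact monotoneOn_digamma (Set.mem_Ioi.2 (by positivity)) (Set.mem_Ioi.2 (by positivity))
      (by linarith)

lemma hasSum_one_div_sub_one_div (hx : 0 < x) (hy : 0 < y) :
    HasSum (fun k : ℕ => 1 / (k + x) - 1 / (k + y)) (digamma y - digamma x) := by
  wlog hxy : x ≤ y generalizing x y
  · simpa using (this hy hx (le_of_not_ge hxy)).neg
  have hneg {z : ℝ} (hz : 0 < z) (m : ℕ) : z ≠ -m :=
    ((neg_nonpos.2 m.cast_nonneg).trans_lt hz).ne'
  have hpartial (n : ℕ) : ∑ k ∈ Finset.range n, (1 / (k + x) - 1 / (k + y)) =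
      digamma (n + x) - digamma (n + y) + (digamma y - digamma x) := by
    rw [digamma_natCast_add (hneg hx), digamma_natCast_add (hneg hy), Finset.sum_sub_distrib]
    ring
  rw [hasSum_iff_tendsto_nat_of_nonneg fun k => sub_nonneg.2 (by gcongr)]
  simp only [hpartial]
  simpa only [zero_add] using
    (tendsto_digamma_natCast_add_sub hx hy).add_const (digamma y - digamma x)

lemma cot_pi_mul_fract (x : ℝ) : cot (π * Int.fract x) = cot (π * x) := by
  rw [Int.fract, ← tan_inv_eq_cot, ← tan_inv_eq_cot, mul_sub, mul_comm π (⌊x⌋ : ℝ),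
    tan_periodic.sub_int_mul_eq]

lemma digamma_one_sub_sub_digamma (hx : Int.fract x ≠ 0) :
    digamma (1 - x) - digamma x = π * cot (π * x) := by
  have hint (m : ℤ) : x ≠ m := fun h => hx (h ▸ Int.fract_intCast m)
  have hx₀ (m : ℕ) : x ≠ -m := mod_cast hint (-m)
  have hx₁ (m : ℕ) : 1 - x ≠ -m := fun h => hint (m + 1) (by push_cast; linarith)
  have hsin : sin (π * x) ≠ 0 := by
    rw [Ne, sin_eq_zero_iff]
    rintro ⟨n, hn⟩
    exact hint n (mul_left_cancel₀ pi_ne_zero (by linarith))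
  have hGamma : logDeriv (fun y => Gamma y * Gamma (1 - y)) x = digamma x - digamma (1 - x) := by
    rw [logDeriv_mul (g := fun y => Gamma (1 - y)) x (Gamma_ne_zero hx₀) (Gamma_ne_zero hx₁)
      (differentiableAt_Gamma hx₀) ((differentiableAt_Gamma hx₁).comp x (by fun_prop))]
    simp only [digamma_eq_logDeriv_Gamma, logDeriv_apply, deriv_comp_const_sub]
    ring
  have hsine : logDeriv (fun y => π / sin (π * y)) x = -(π * cot (π * x)) := by
    have hcomp : logDeriv (fun y => sin (π * y)) x = cot (π * x) * π := by
      rw [← Function.comp_def sin, logDeriv_comp (by fun_prop) (by fun_prop), logDeriv_sin,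
        deriv_const_mul_id]
    rw [logDeriv_div x pi_ne_zero hsin (by fun_prop) (by fun_prop), logDeriv_const, hcomp,
      Pi.zero_apply, zero_sub, mul_comm]
  simp only [Gamma_mul_Gamma_one_sub, hsine] at hGamma
  linarith

end Digamma

section HurwitzSeries

variable {x y s : ℝ}

lemma summable_one_div_natCast_add_rpow (hx : 0 < x) (hs : 1 < s) :
    Summable fun k : ℕ => 1 / (k + x) ^ s :=
  ((summable_one_div_nat_add_rpow x s).2 hs).congr fun k => by rw [abs_of_pos (by positivity)]

lemma abs_one_div_rpow_sub_one_div_rpow_le {m : ℝ} (hm : 0 < m) (hx : m ≤ x) (hy : m ≤ y)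
    (hs : 0 ≤ s) : |1 / x ^ s - 1 / y ^ s| ≤ s * |x - y| * (1 / m ^ (s + 1)) := by
  have hderiv : ∀ z ∈ Set.Ici m,
      HasDerivWithinAt (fun z => z ^ (-s)) (-s * z ^ (-s - 1)) (Set.Ici m) z := fun z hz =>
    (hasDerivAt_rpow_const (Or.inl (hm.trans_le hz).ne')).hasDerivWithinAt
  have hbound : ∀ z ∈ Set.Ici m, ‖-s * z ^ (-s - 1)‖ ≤ s * m ^ (-s - 1) := fun z hz => by
    have hz0 : 0 < z := hm.trans_le hz
    rw [norm_mul, norm_neg, norm_of_nonneg hs, norm_of_nonneg (by positivity)]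
    exact mul_le_mul_of_nonneg_left (rpow_le_rpow_of_nonpos hm hz (by linarith)) hs
  have hmvt := (convex_Ici m).norm_image_sub_le_of_norm_hasDerivWithin_le hderiv hbound hy hx
  rw [norm_eq_abs, norm_eq_abs, rpow_neg (hm.le.trans hx), rpow_neg (hm.le.trans hy), ← neg_add',
    rpow_neg hm.le] at hmvt
  simpa only [one_div, mul_right_comm] using hmvt

lemma one_div_rpow_le_add {a b : ℝ} (hx : 0 < x) (has : a ≤ s) (hsb : s ≤ b) :
    1 / x ^ s ≤ 1 / x ^ a + 1 / x ^ b := by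
  rcases le_total 1 x with h1 | h1
  · exact (one_div_le_one_div_of_le (by positivity) (rpow_le_rpow_of_exponent_le h1 has)).trans
      (le_add_of_nonneg_right (by positivity))
  · exact (one_div_le_one_div_of_le (by positivity) (rpow_le_rpow_of_exponent_ge hx h1 hsb)).trans
      (le_add_of_nonneg_left (by positivity))

lemma continuousAt_tsum_one_div_rpow_sub (hx : 0 < x) (hy : 0 < y) (hs : 0 < s) :
    ContinuousAt (fun t => ∑' k : ℕ, (1 / (k + x) ^ t - 1 / (k + y) ^ t)) s := by
  have hm : 0 < min x y := lt_min hx hy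
  have hmajorant : Summable fun k : ℕ => 2 * s * |x - y| *
      (1 / (k + min x y) ^ (s / 2 + 1) + 1 / (k + min x y) ^ (2 * s + 1)) :=
    ((summable_one_div_natCast_add_rpow hm (by linarith)).add
      (summable_one_div_natCast_add_rpow hm (by linarith))).mul_left _
  refine tendsto_tsum_of_dominated_convergence hmajorant (fun k => ?_) ?_
  · have hterm {z : ℝ} (hz : 0 < z) : ContinuousAt (fun t : ℝ => 1 / z ^ t) s :=
      continuousAt_const.div (continuousAt_const_rpow hz.ne') (by positivity)
    exact (hterm (by positivity)).sub (hterm (by positivity))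
  · filter_upwards [Icc_mem_nhds (half_lt_self hs) (lt_two_mul_self hs)] with t ht k
    have ht0 : 0 ≤ t := by linarith [ht.1]
    calc ‖1 / (k + x) ^ t - 1 / (k + y) ^ t‖
        ≤ t * |(k + x) - (k + y)| * (1 / (k + min x y) ^ (t + 1)) :=
          abs_one_div_rpow_sub_one_div_rpow_le (by positivity)
            (by gcongr; exact min_le_left x y) (by gcongr; exact min_le_right x y) ht0
      _ ≤ 2 * s * |x - y| *
          (1 / (k + min x y) ^ (s / 2 + 1) + 1 / (k + min x y) ^ (2 * s + 1)) := by
        rw [add_sub_add_left_eq_sub]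
        gcongr
        · exact ht.2
        · exact one_div_rpow_le_add (by positivity) (by linarith [ht.1]) (by linarith [ht.2])

lemma tendsto_tsum_one_div_rpow_sub_tsum (hx : 0 < x) (hy : 0 < y) :
    Tendsto (fun s : ℝ => (∑' k : ℕ, 1 / (k + x) ^ s) - ∑' k : ℕ, 1 / (k + y) ^ s)
      (𝓝[>] 1) (𝓝 (digamma y - digamma x)) := by
  have hlim := (continuousAt_tsum_one_div_rpow_sub hx hy one_pos).tendsto
  simp only [rpow_one, (hasSum_one_div_sub_one_div hx hy).tsum_eq] at hlim
  refine (hlim.mono_left nhdsWithin_le_nhds).congr' ?_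
  filter_upwards [self_mem_nhdsWithin] with s hs
  exact (summable_one_div_natCast_add_rpow hx hs).tsum_sub (summable_one_div_natCast_add_rpow hy hs)

end HurwitzSeries

section ResidueClasses

variable {N : ℕ} {a b : ℤ}

lemma tsum_pnat_ite_modEq {M : Type*} [AddCommMonoid M] [TopologicalSpace M] (f : ℕ → M) {r : ℕ}
    (hr : 0 < r) (hrN : r ≤ N) :
    (∑' n : ℕ+, if (n : ℤ) ≡ r [ZMOD N] then f n else 0) = ∑' k : ℕ, f (r + k * N) := by
  have hN : 0 < N := hr.trans_le hrN
  let e : ℕ → ℕ+ := fun k => ⟨r + k * N, by positivity⟩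
  have he : Function.Injective e := fun i j hij =>
    Nat.eq_of_mul_eq_mul_right hN (Nat.add_left_cancel (congrArg PNat.val hij))
  have hsupport : (Function.support fun n : ℕ+ => if (n : ℤ) ≡ r [ZMOD N] then f n else 0) ⊆
      Set.range e := fun n hn => by
    have hmod : r ≡ n [MOD N] := (Int.natCast_modEq_iff.1 (of_not_not fun h => hn (if_neg h))).symm
    have hrn : r ≤ n := by
      by_contra! hnr
      have hle := Nat.le_of_dvd (by omega) ((Nat.modEq_iff_dvd' hnr.le).1 hmod.symm)
      have hn0 := n.pos
      omega
    obtain ⟨k, hk⟩ := (Nat.modEq_iff_dvd' hrn).1 hmod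
    exact ⟨k, PNat.eq (by simp only [e, PNat.mk_coe]; lia)⟩
  rw [← he.tsum_eq hsupport]
  refine tsum_congr fun k => if_pos ?_
  simp [e, Int.ModEq]

lemma fract_intCast_div_pos (hN : 0 < N) (ha : ¬ (N : ℤ) ∣ a) : 0 < Int.fract ((a : ℝ) / N) := by
  have hmod : 0 < a % N := (Int.emod_pos_of_not_dvd ha).resolve_left (by omega)
  rw [Int.fract_div_intCast_eq_div_intCast_mod]
  positivity

lemma tsum_pnat_ite_modEq_one_div_rpow (hN : 0 < N) (ha : ¬ (N : ℤ) ∣ a) (s : ℝ) :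
    (∑' n : ℕ+, if (n : ℤ) ≡ a [ZMOD N] then 1 / (n : ℝ) ^ s else 0) =
      1 / (N : ℝ) ^ s * ∑' k : ℕ, 1 / (k + Int.fract ((a : ℝ) / N)) ^ s := by
  obtain ⟨r, hr⟩ := Int.eq_ofNat_of_zero_le (Int.emod_nonneg a (by omega : (N : ℤ) ≠ 0))
  have hrN := Int.emod_lt_of_pos a (by omega : 0 < (N : ℤ))
  have hr0 := (Int.emod_pos_of_not_dvd ha).resolve_left (by omega)
  have hmod (n : ℤ) : n ≡ a [ZMOD N] ↔ n ≡ r [ZMOD N] := by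
    rw [← hr, Int.ModEq, Int.ModEq, Int.emod_emod]
  simp only [hmod, Int.fract_div_intCast_eq_div_intCast_mod, hr, Int.cast_natCast, ← tsum_mul_left]
  rw [tsum_pnat_ite_modEq (fun n : ℕ => 1 / (n : ℝ) ^ s) (by omega) (by omega)]
  refine tsum_congr fun k => ?_
  have hscale : ((r + k * N : ℕ) : ℝ) = N * (k + (r : ℝ) / N) := by
    push_cast
    field_simp
    ring
  rw [hscale, mul_rpow (by positivity) (by positivity), one_div_mul_one_div]

lemma tendsto_tsum_modEq_sub_tsum_modEq (hN : 0 < N) (ha : ¬ (N : ℤ) ∣ a) (hb : ¬ (N : ℤ) ∣ b) :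
    Tendsto
      (fun s : ℝ =>
        (∑' n : ℕ+, if (n : ℤ) ≡ a [ZMOD N] then 1 / (n : ℝ) ^ s else 0) -
          ∑' n : ℕ+, if (n : ℤ) ≡ b [ZMOD N] then 1 / (n : ℝ) ^ s else 0)
      (𝓝[>] 1)
      (𝓝 (1 / N * (digamma (Int.fract ((b : ℝ) / N)) - digamma (Int.fract ((a : ℝ) / N))))) := by
  have hscale : Tendsto (fun s : ℝ => 1 / (N : ℝ) ^ s) (𝓝[>] 1) (𝓝 (1 / N)) := by
    have hcont : ContinuousAt (fun s : ℝ => 1 / (N : ℝ) ^ s) 1 :=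
      continuousAt_const.div (continuousAt_const_rpow (by positivity)) (by positivity)
    simpa using hcont.tendsto.mono_left nhdsWithin_le_nhds
  simp only [tsum_pnat_ite_modEq_one_div_rpow hN ha, tsum_pnat_ite_modEq_one_div_rpow hN hb,
    ← mul_sub]
  exact hscale.mul (tendsto_tsum_one_div_rpow_sub_tsum (fract_intCast_div_pos hN ha)
    (fract_intCast_div_pos hN hb))

end ResidueClasses

/-- For integers `b`, `N` with `N ≥ 1` and `N ∤ b`, as `s → 1⁺` the difference of the
Dirichlet series over `n ≡ b (mod N)` and over `n ≡ -b (mod N)` tends to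
`(1/N)(ψ(1-{b/N}) - ψ({b/N}))`, which equals `(π/N)·cot(πb/N)`. -/
theorem dirichlet_difference_limit (b N : ℤ) (hN : 1 ≤ N) (hb : ¬ (N ∣ b)) :
    Tendsto
      (fun s : ℝ =>
        (∑' n : ℕ+, if (n : ℤ) ≡ b [ZMOD N] then 1 / (n : ℝ) ^ s else 0) -
          ∑' n : ℕ+, if (n : ℤ) ≡ -b [ZMOD N] then 1 / (n : ℝ) ^ s else 0)
      (nhdsWithin 1 (Set.Ioi 1))
      (nhds ((1 / N) * (digamma (1 - Int.fract ((b : ℝ) / N)) -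
        digamma (Int.fract ((b : ℝ) / N))))) ∧
    (1 / (N : ℝ)) * (digamma (1 - Int.fract ((b : ℝ) / N)) -
        digamma (Int.fract ((b : ℝ) / N))) = (π / N) * Real.cot (π * b / N) := by
  lift N to ℕ using by omega
  have hN0 : 0 < N := by omega
  have hfract : Int.fract ((b : ℝ) / N) ≠ 0 := (fract_intCast_div_pos hN0 hb).ne'
  have hneg : Int.fract (((-b : ℤ) : ℝ) / N) = 1 - Int.fract ((b : ℝ) / N) := by
    rw [Int.cast_neg, neg_div, Int.fract_neg hfract]
  have hreflection := digamma_one_sub_sub_digamma (x := Int.fract ((b : ℝ) / N))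
    (by rwa [Int.fract_fract])
  rw [cot_pi_mul_fract] at hreflection
  simp only [Int.cast_natCast]
  constructor
  · simpa only [hneg] using tendsto_tsum_modEq_sub_tsum_modEq hN0 hb (b := -b) (by simpa using hb)
  · rw [hreflection, mul_div_assoc]
    ring
end

section
/- For integers a, b not divisible by N, ∫₀^∞ ( e_{a,b}(it) + e_{a,−b}(it) − (1+ζ^a)/(1−ζ^a) ) · t dt = i · Cl₂(2πa/N) · B(b/N), where ζ = exp(2πi/N), Cl₂(x) = ∑_{m≥1} sin(mx)/m², and B(x) = {x}² − {x} + 1/6. -/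
/-!
For `t > 0` the constant terms of `e_{a,b}` and `e_{a,-b}` that depend on `b` cancel, and the
coefficient of `q^{mn}` in the sum factors:
`(ζ^{am} - ζ^{-am}) (ζ^{bn} + ζ^{-bn}) = 4i sin(2πam/N) cos(2πbn/N)`.
Such a double series with product coefficients has as Mellin transform the product of two Dirichlet
series, times `(2π)^{-s} Γ(s)`. At `s = 2` the sine series is `Cl₂(2πa/N)` and the cosine series is
the Fourier expansion of `π² B(b/N)`.
-/

open Real MeasureTheory

/-- Clausen's dilogarithmic function `Cl₂(x) = ∑_{m≥1} sin(mx)/m²`. -/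
noncomputable def Cl2 (x : ℝ) : ℝ := ∑' m : ℕ+, Real.sin (m * x) / (m : ℝ) ^ 2

/-- The second Bernoulli polynomial at the fractional part: `B(x) = {x}² - {x} + 1/6`. -/
noncomputable def B2 (x : ℝ) : ℝ := Int.fract x ^ 2 - Int.fract x + 1 / 6

/-- The root of unity `ζ_N = exp(2πi/N)`. -/
noncomputable def zetaN (N : ℤ) : ℂ := Complex.exp (2 * π * Complex.I / N)

/-- The weight-1 Eisenstein series `e_{a,b}` of level `N²` evaluated at `τ = it`
(so `q = exp(-2πt)`). -/
noncomputable def eisE (N a b : ℤ) (t : ℝ) : ℂ :=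
  (1 / 2) * ((1 + zetaN N ^ a) / (1 - zetaN N ^ a) +
      (1 + zetaN N ^ b) / (1 - zetaN N ^ b)) +
    ∑' p : ℕ+ × ℕ+,
      (zetaN N ^ (a * (p.1 : ℤ) + b * (p.2 : ℤ)) -
          zetaN N ^ (-(a * (p.1 : ℤ) + b * (p.2 : ℤ)))) *
        (Real.exp (-(2 * π * t)) : ℂ) ^ ((p.1 : ℕ) * (p.2 : ℕ))

section DoubleSeries

/-- The double series `∑_{m,n≥1} f(m) g(n) q^{mn}` at `q = exp(-2πt)`, the shape of the
non-constant part of an Eisenstein series on the imaginary axis. As for `LSeries`, the values at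
`0` are ignored. -/
noncomputable def qDoubleSeries (f g : ℕ → ℂ) (t : ℝ) : ℂ :=
  ∑' p : ℕ+ × ℕ+, f p.1 * g p.2 * (Real.exp (-(2 * π * t)) : ℂ) ^ ((p.1 : ℕ) * (p.2 : ℕ))

lemma summable_mul_exp_of_summable_div_rpow {ι : Type*} {a : ι → ℂ} {p : ι → ℝ} {σ t : ℝ}
    (hσ : 0 ≤ σ) (hp : ∀ i, 0 < p i) (ha : Summable fun i ↦ ‖a i‖ / p i ^ σ) (ht : 0 < t) :
    Summable fun i ↦ a i * (Real.exp (-p i * t) : ℂ) := by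
  refine (ha.mul_left ((σ / t) ^ σ)).of_norm_bounded fun i ↦ ?_
  have hexp : p i ^ σ ≤ (σ / t) ^ σ * Real.exp (t * p i) := by
    simpa only [abs_of_pos (hp i), abs_of_pos ht] using
      ProbabilityTheory.rpow_abs_le_mul_exp_abs (p i) hσ ht.ne'
  have hdecay : Real.exp (-p i * t) ≤ (σ / t) ^ σ / p i ^ σ := by
    rw [le_div_iff₀ (Real.rpow_pos_of_pos (hp i) σ), neg_mul, Real.exp_neg,
      inv_mul_le_iff₀ (Real.exp_pos _), mul_comm (p i)]
    exact hexp.trans_eq (mul_comm _ _)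
  calc ‖a i * (Real.exp (-p i * t) : ℂ)‖
      = ‖a i‖ * Real.exp (-p i * t) := by
        rw [norm_mul, Complex.norm_real, Real.norm_of_nonneg (Real.exp_pos _).le]
    _ ≤ ‖a i‖ * ((σ / t) ^ σ / p i ^ σ) := by gcongr
    _ = (σ / t) ^ σ * (‖a i‖ / p i ^ σ) := by ring

lemma exp_neg_two_pi_mul_pow (m n : ℕ) (t : ℝ) :
    (Real.exp (-(2 * π * t)) : ℂ) ^ (m * n) = Real.exp (-(2 * π * (m * n)) * t) := by
  rw [← Complex.ofReal_pow, ← Real.exp_nat_mul]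
  congr 2
  push_cast
  ring

lemma term_mul_term_eq_div (f g : ℕ → ℂ) (s : ℂ) (p : ℕ+ × ℕ+) :
    LSeries.term f s p.1 * LSeries.term g s p.2 =
      f p.1 * g p.2 / ((p.1 * p.2 : ℝ) : ℂ) ^ s := by
  rw [LSeries.term_of_ne_zero p.1.ne_zero, LSeries.term_of_ne_zero p.2.ne_zero,
    div_mul_div_comm, Complex.ofReal_mul,
    Complex.mul_cpow_ofReal_nonneg (Nat.cast_nonneg _) (Nat.cast_nonneg _)]
  simp only [Complex.ofReal_natCast]

lemma two_pi_mul_pnat_mul_pnat_pos (p : ℕ+ × ℕ+) : 0 < 2 * π * ((p.1 : ℝ) * p.2) :=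
  mul_pos two_pi_pos (mul_pos (Nat.cast_pos.mpr p.1.pos) (Nat.cast_pos.mpr p.2.pos))

variable {f g : ℕ → ℂ} {s : ℂ}

lemma hasSum_term_pnat (hf : LSeriesSummable f s) :
    HasSum (fun m : ℕ+ ↦ LSeries.term f s m) (LSeries f s) :=
  hasSum_pnat_iff.mpr (by simpa only [LSeries.term_zero, add_zero] using! hf.LSeriesHasSum)

lemma hasSum_term_mul_term (hf : LSeriesSummable f s) (hg : LSeriesSummable g s) :
    HasSum (fun p : ℕ+ × ℕ+ ↦ LSeries.term f s p.1 * LSeries.term g s p.2)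
      (LSeries f s * LSeries g s) := by
  have hsummable := summable_mul_of_summable_norm (hasSum_term_pnat hf).summable.norm
    (hasSum_term_pnat hg).summable.norm
  exact HasSum.mul (f := fun m : ℕ+ ↦ LSeries.term f s m) (g := fun n : ℕ+ ↦ LSeries.term g s n)
    (hasSum_term_pnat hf) (hasSum_term_pnat hg) hsummable

lemma summable_norm_mul_div_rpow (hf : LSeriesSummable f s) (hg : LSeriesSummable g s) :
    Summable fun p : ℕ+ × ℕ+ ↦ ‖f p.1 * g p.2‖ / (2 * π * (p.1 * p.2)) ^ s.re := by
  refine ((hasSum_term_mul_term hf hg).summable.norm.mul_left ((2 * π) ^ s.re)⁻¹).congr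
    fun p ↦ ?_
  have hmn : (0 : ℝ) < p.1 * p.2 :=
    pos_of_mul_pos_right (two_pi_mul_pnat_mul_pnat_pos p) two_pi_pos.le
  rw [term_mul_term_eq_div, norm_div, Complex.norm_cpow_eq_rpow_re_of_pos hmn,
    Real.mul_rpow two_pi_pos.le hmn.le]
  field_simp

lemma summable_qDoubleSeries_terms (hs : 0 ≤ s.re) (hf : LSeriesSummable f s)
    (hg : LSeriesSummable g s) {t : ℝ} (ht : 0 < t) :
    Summable fun p : ℕ+ × ℕ+ ↦
      f p.1 * g p.2 * (Real.exp (-(2 * π * t)) : ℂ) ^ ((p.1 : ℕ) * (p.2 : ℕ)) := by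
  simp only [exp_neg_two_pi_mul_pow]
  exact summable_mul_exp_of_summable_div_rpow hs two_pi_mul_pnat_mul_pnat_pos
    (summable_norm_mul_div_rpow hf hg) ht

theorem mellin_qDoubleSeries (hs : 0 < s.re) (hf : LSeriesSummable f s)
    (hg : LSeriesSummable g s) :
    mellin (qDoubleSeries f g) s =
      (2 * π : ℂ) ^ (-s) * Complex.Gamma s * (LSeries f s * LSeries g s) := by
  have hseries (t : ℝ) (ht : 0 < t) :
      HasSum (fun p : ℕ+ × ℕ+ ↦ f p.1 * g p.2 * (Real.exp (-(2 * π * (p.1 * p.2)) * t) : ℂ))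
        (qDoubleSeries f g t) := by
    simp only [← exp_neg_two_pi_mul_pow]
    exact (summable_qDoubleSeries_terms hs.le hf hg ht).hasSum
  have hmellin := hasSum_mellin (a := fun p : ℕ+ × ℕ+ ↦ f p.1 * g p.2)
    (fun p ↦ .inr (two_pi_mul_pnat_mul_pnat_pos p)) hs hseries (summable_norm_mul_div_rpow hf hg)
  refine hmellin.unique (((hasSum_term_mul_term hf hg).mul_left _).congr_fun fun p ↦ ?_)
  rw [term_mul_term_eq_div, Complex.ofReal_mul (2 * π),
    Complex.mul_cpow_ofReal_nonneg two_pi_pos.le (by positivity), Complex.cpow_neg]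
  push_cast
  ring

end DoubleSeries

lemma sinZeta_two (x : ℝ) : HurwitzZeta.sinZeta x 2 = Cl2 (2 * π * x) := by
  rw [← (HurwitzZeta.hasSum_nat_sinZeta x (by simp)).tsum_eq, ← tsum_pnat_eq_tsum_of_eq_zero
    (by simp), Cl2, Complex.ofReal_tsum]
  refine tsum_congr fun m ↦ ?_
  rw [mul_comm (m : ℝ)]
  push_cast
  rw [Complex.cpow_ofNat]

lemma cosZeta_two (x : ℝ) : HurwitzZeta.cosZeta x 2 = π ^ 2 * B2 x := by
  have hfract := HurwitzZeta.cosZeta_two_mul_nat (x := Int.fract x) one_ne_zero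
    ⟨Int.fract_nonneg x, (Int.fract_lt_one x).le⟩
  have heval : Polynomial.aeval ((Int.fract x : ℝ) : ℂ) (Polynomial.bernoulli 2) = B2 x := by
    have hreal : bernoulliFun 2 (Int.fract x) = B2 x := by rw [bernoulliFun_two, B2, one_div]
    rw [← hreal, bernoulliFun, Polynomial.eval_map_algebraMap, ← Complex.coe_algebraMap,
      Polynomial.aeval_algebraMap_apply]
  simp only [AddCircle.coe_fract, Nat.cast_one, mul_one, one_add_one_eq_two, neg_one_sq,
    one_mul, Nat.factorial_two, Nat.cast_ofNat, Polynomial.eval_map_algebraMap, heval] at hfract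
  rw [hfract]
  ring

lemma zetaN_zpow (N k : ℤ) :
    zetaN N ^ k = Complex.exp ((2 * π * k / N : ℝ) * Complex.I) := by
  rw [zetaN, ← Complex.exp_int_mul]
  congr 1
  push_cast
  ring

lemma zetaN_ne_zero (N : ℤ) : zetaN N ≠ 0 := Complex.exp_ne_zero _

lemma norm_zetaN_zpow (N k : ℤ) : ‖zetaN N ^ k‖ = 1 := by
  rw [zetaN_zpow, Complex.norm_exp_ofReal_mul_I]

lemma zetaN_zpow_sub_zpow_neg (N k : ℤ) :
    zetaN N ^ k - zetaN N ^ (-k) = 2 * Complex.I * Real.sin (2 * π * k / N) := by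
  rw [zpow_neg, zetaN_zpow, ← Complex.exp_neg, ← neg_mul, Complex.exp_mul_I, Complex.exp_mul_I,
    Complex.cos_neg, Complex.sin_neg, Complex.ofReal_sin]
  ring

lemma zetaN_zpow_add_zpow_neg (N k : ℤ) :
    zetaN N ^ k + zetaN N ^ (-k) = 2 * Real.cos (2 * π * k / N) := by
  rw [zpow_neg, zetaN_zpow, ← Complex.exp_neg, ← neg_mul, Complex.exp_mul_I, Complex.exp_mul_I,
    Complex.cos_neg, Complex.sin_neg, Complex.ofReal_cos]
  ring

lemma one_add_inv_div_one_sub_inv {K : Type*} [Field K] {w : K} (hw : w ≠ 0) :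
    (1 + w⁻¹) / (1 - w⁻¹) = -((1 + w) / (1 - w)) := by
  rw [← mul_div_mul_left _ _ hw, mul_add, mul_sub, mul_inv_cancel₀ hw, mul_one, ← div_neg]
  congr 1 <;> ring

lemma zpow_coeff_add_coeff_neg {K : Type*} [Field K] {w : K} (hw : w ≠ 0) (j k : ℤ) :
    (w ^ (j + k) - w ^ (-(j + k))) + (w ^ (j + -k) - w ^ (-(j + -k))) =
      (w ^ j - w ^ (-j)) * (w ^ k + w ^ (-k)) := by
  simp only [neg_add, neg_neg, zpow_add₀ hw]
  ring

lemma summable_eisE_terms (N a b : ℤ) {t : ℝ} (ht : 0 < t) :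
    Summable fun p : ℕ+ × ℕ+ ↦
      (zetaN N ^ (a * (p.1 : ℤ) + b * (p.2 : ℤ)) -
          zetaN N ^ (-(a * (p.1 : ℤ) + b * (p.2 : ℤ)))) *
        (Real.exp (-(2 * π * t)) : ℂ) ^ ((p.1 : ℕ) * (p.2 : ℕ)) := by
  have hsummable (c : ℤ) : LSeriesSummable (fun n ↦ zetaN N ^ (c * n)) 2 :=
    LSeriesSummable_of_bounded_of_one_lt_re (fun n _ ↦ (norm_zetaN_zpow N (c * n)).le) (by simp)
  have hdouble (a b : ℤ) := summable_qDoubleSeries_terms (by simp) (hsummable a) (hsummable b) ht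
  refine ((hdouble a b).sub (hdouble (-a) (-b))).congr fun p ↦ ?_
  rw [neg_add, ← neg_mul a, ← neg_mul b, zpow_add₀ (zetaN_ne_zero N), zpow_add₀ (zetaN_ne_zero N),
    sub_mul]

lemma zetaN_zpow_coeff_add_coeff_neg (N a b m n : ℤ) :
    (zetaN N ^ (a * m + b * n) - zetaN N ^ (-(a * m + b * n))) +
      (zetaN N ^ (a * m + -b * n) - zetaN N ^ (-(a * m + -b * n))) =
    4 * Complex.I *
      (Real.sin (2 * π * (a / N) * m) * Real.cos (2 * π * (b / N) * n)) := by
  have hangle (c k : ℤ) : 2 * π * (c * k : ℤ) / N = 2 * π * (c / N) * k := by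
    push_cast
    ring
  rw [neg_mul b, zpow_coeff_add_coeff_neg (zetaN_ne_zero N), zetaN_zpow_sub_zpow_neg,
    zetaN_zpow_add_zpow_neg, hangle, hangle]
  ring

lemma eisE_add_eisE_neg (N a b : ℤ) {t : ℝ} (ht : 0 < t) :
    eisE N a b t + eisE N a (-b) t - (1 + zetaN N ^ a) / (1 - zetaN N ^ a) =
      4 * Complex.I * qDoubleSeries (fun m ↦ Real.sin (2 * π * (a / N) * m))
        (fun n ↦ Real.cos (2 * π * (b / N) * n)) t := by
  have hcoeff (p : ℕ+ × ℕ+) := zetaN_zpow_coeff_add_coeff_neg N a b (p.1 : ℤ) (p.2 : ℤ)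
  simp only [Int.cast_natCast] at hcoeff
  have hseries := (summable_eisE_terms N a b ht).tsum_add (summable_eisE_terms N a (-b) ht)
  simp only [← add_mul, hcoeff, mul_assoc (4 * Complex.I), tsum_mul_left] at hseries
  rw [qDoubleSeries, hseries, eisE, eisE, zpow_neg (zetaN N) b,
    one_add_inv_div_one_sub_inv (zpow_ne_zero b (zetaN_ne_zero N))]
  ring

theorem mellin_eisE_add_eisE_neg (N a b : ℤ) {s : ℂ} (hs : 1 < s.re) :
    mellin (fun t ↦ eisE N a b t + eisE N a (-b) t - (1 + zetaN N ^ a) / (1 - zetaN N ^ a)) s =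
      4 * Complex.I * ((2 * π : ℂ) ^ (-s) * Complex.Gamma s *
        (HurwitzZeta.sinZeta (a / N : ℝ) s * HurwitzZeta.cosZeta (b / N : ℝ) s)) := by
  have hsin := HurwitzZeta.LSeriesHasSum_sin (a / N) hs
  have hcos := HurwitzZeta.LSeriesHasSum_cos (b / N) hs
  rw [← hsin.LSeries_eq, ← hcos.LSeries_eq, ← mellin_qDoubleSeries (zero_lt_one.trans hs)
    hsin.LSeriesSummable hcos.LSeriesSummable, ← smul_eq_mul (4 * Complex.I), ← mellin_const_smul]
  refine setIntegral_congr_fun measurableSet_Ioi fun t ht ↦ ?_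
  simp only [eisE_add_eisE_neg N a b ht, smul_eq_mul]

/-- For integers `a`, `b` not divisible by `N`,
`∫₀^∞ (e_{a,b}(it) + e_{a,-b}(it) - (1+ζ^a)/(1-ζ^a)) t dt = i·Cl₂(2πa/N)·B(b/N)`. -/
theorem integral_eisE (N a b : ℤ) (hN : 1 ≤ N) (ha : ¬ (N ∣ a)) (hb : ¬ (N ∣ b)) :
    ∫ t in Set.Ioi (0 : ℝ),
        (eisE N a b t + eisE N a (-b) t -
            (1 + zetaN N ^ a) / (1 - zetaN N ^ a)) * (t : ℂ) =
      Complex.I * (Cl2 (2 * π * a / N) : ℂ) * (B2 ((b : ℝ) / N) : ℂ) := by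
  calc _ = mellin (fun t ↦ eisE N a b t + eisE N a (-b) t -
          (1 + zetaN N ^ a) / (1 - zetaN N ^ a)) 2 := by
        refine setIntegral_congr_fun measurableSet_Ioi fun t _ ↦ ?_
        rw [smul_eq_mul, mul_comm, show (2 - 1 : ℂ) = 1 by norm_num, Complex.cpow_one]
    _ = 4 * Complex.I * ((2 * π : ℂ) ^ (-2 : ℂ) * Complex.Gamma 2 *
          (Cl2 (2 * π * (a / N)) * (π ^ 2 * B2 (b / N)))) := by
        rw [mellin_eisE_add_eisE_neg N a b (by simp), sinZeta_two, cosZeta_two]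
    _ = Complex.I * Cl2 (2 * π * a / N) * B2 (b / N) := by
        rw [← mul_div_assoc, Complex.cpow_neg, Complex.cpow_ofNat,
          Complex.Gamma_ofNat_eq_factorial]
        field_simp
        norm_num
end
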